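/- arXiv:0802.0405 — 2 statements merged into one kernel-verified Lean document; each statement's English description precedes it below -/
import Mathlib

section
/- Let (W,S) be an irreducible right-angled Coxeter system such that W is infinite and W is not isomorphic to the infinite dihedral group ℤ₂ * ℤ₂. Then for every s₀ ∈ S there exist t₀ ∈ S and a number K > 0 such that (1) o(s₀t₀) = ∞, and (2) for each w, v ∈ W there exists x ∈ W with ℓ(x) ≤ K and wx, vx ∈ W^{{s₀}}. -/
/-! The graph with an edge `i — j` whenever `m(i,j) = ∞` is called the `∞`-graph below.

The proof rests on three facts about right descents in a right-angled Coxeter system.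

* If `M i j = ∞`, then `i` and `j` are never both right descents of `w`
  (`not_descent_both`).
* If `i ≠ j` commute, then `j` is a right descent of `w` iff it is one of `w sᵢ`
  (`descent_mul_commute`).
* Hence (`descent_mul_walk`), if `b` is not a right descent of `w` and `b = s₁, …, sₖ = c` is a walk
  in the `∞`-graph, every step of `w s₁ ⋯ sₖ` ascends, `c` is a right descent of the result, and any
  other right descent commutes with, and differs from, all the `sᵢ`. If the walk visits every
  vertex, the right descent set of `w s₁ ⋯ sₖ` is `{c}`.

Irreducibility makes the `∞`-graph connected, so covering walks from any `b` to `s₀` exist. One walk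
serves both `w` and `v` as soon as `b` is a descent of neither. Such a `b` exists after multiplying
by at most one generator (`exists_common_nondescent`): as `W` is infinite and not infinite dihedral,
the `∞`-graph has a path `a — b — c`. If the descents of `w` and `v` cover `S`, say with
`b ∈ S(w)`, then `a, c ∉ S(w)`, so `a, c ∈ S(v)`, and `b` is a descent neither of `w sₐ`, which
has the descent `a`, nor of `v sₐ`, which still has the descent `c`. Finiteness of `S` bounds the
length of the walks.

For the facts on descents, `W` acts on `W × ℤ/2` by `sᵢ • (r, ε) = (sᵢ r sᵢ, ε + [r = sᵢ])`; this
yields a cocycle `η(w, r) ∈ ℤ/2` detecting whether `r` is a right inversion of `w`. The first fact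
reduces, through a shortest element of the coset `w⟨sᵢ, sⱼ⟩`, to `⟨sᵢ, sⱼ⟩`, whose lengths are
bounded below by an action of `W` on `ℤ`. -/

/-- The (right) descent set `S(w) = { s ∈ S : ℓ(ws) < ℓ(w) }` of `w`. -/
def descentSet {B W : Type*} [Group W] {M : CoxeterMatrix B}
    (cs : CoxeterSystem M W) (w : W) : Set B :=
  {i : B | cs.IsRightDescent w i}

/-- A Coxeter matrix is right-angled if `m(s,t) ∈ {2, ∞}` for all `s ≠ t`
(`∞` being encoded as `0`). -/
def CoxeterMatrix.RightAngled {B : Type*} (M : CoxeterMatrix B) : Prop :=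
  ∀ i j : B, i ≠ j → M.M i j = 2 ∨ M.M i j = 0

/-- A Coxeter system `(W,S)` is irreducible if there is no nonempty proper subset
`T ⊆ S` such that `W` decomposes as the direct product of the parabolic subgroups
`W_T` and `W_{S∖T}`. -/
def CoxeterSystem.Irreducible {B W : Type*} [Group W] {M : CoxeterMatrix B}
    (cs : CoxeterSystem M W) : Prop :=
  ¬ ∃ T : Set B, T.Nonempty ∧ T ≠ Set.univ ∧
    (∀ g ∈ Subgroup.closure (cs.simple '' T),
      ∀ h ∈ Subgroup.closure (cs.simple '' Tᶜ), Commute g h) ∧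
    Subgroup.closure (cs.simple '' T) ⊓ Subgroup.closure (cs.simple '' Tᶜ) = ⊥ ∧
    Subgroup.closure (cs.simple '' T) ⊔ Subgroup.closure (cs.simple '' Tᶜ) = ⊤

namespace RACG

open CoxeterSystem

variable {B W : Type*} [Group W] {M : CoxeterMatrix B} (cs : CoxeterSystem M W)

/-! ### The inversion cocycle -/

open Classical in
/-- The map `(r, ε) ↦ (sᵢ r sᵢ, ε + [r = sᵢ])` on `W × ℤ/2`. -/
noncomputable def invGen (i : B) : Function.End (W × ZMod 2) := fun p =>
  (cs.simple i * p.1 * cs.simple i, p.2 + if p.1 = cs.simple i then 1 else 0)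

theorem commute_simple {i j : B} (h : M i j = 2) :
    cs.simple i * cs.simple j = cs.simple j * cs.simple i := by
  have h1 := cs.simple_mul_simple_pow i j
  rw [h, pow_two] at h1
  have := eq_inv_of_mul_eq_one_left h1
  simpa using this

theorem invGen_liftable (hra : M.RightAngled) : M.IsLiftable (invGen cs) := by
  classical
  have hz : ∀ x : ZMod 2, x + x = 0 := by decide
  intro i j
  by_cases hij : i = j
  · subst hij
    rw [M.diagonal, pow_one]
    funext p
    obtain ⟨r, e⟩ := p
    change invGen cs i (invGen cs i (r, e)) = (r, e)
    have : cs.simple i * r * cs.simple i = cs.simple i ↔ r = cs.simple i := by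
      rw [mul_eq_right, ← cs.inv_simple i, inv_mul_eq_one, eq_comm, cs.inv_simple]
    simp only [invGen, Prod.mk.injEq, this]
    refine ⟨by simp [mul_assoc], ?_⟩
    rw [add_assoc, hz, add_zero]
  rcases hra i j hij with h | h
  · have hc := commute_simple cs h
    rw [show M i j = 2 from h, pow_two]
    funext p
    obtain ⟨r, e⟩ := p
    change invGen cs i (invGen cs j (invGen cs i (invGen cs j (r, e)))) = (r, e)
    have key : ∀ a b x : W, a * a = 1 → a * b = b * a → (a * x * a = b ↔ x = b) := by
      intro a b x ha hab
      constructor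
      · intro hx
        have : a * (a * x * a) * a = a * b * a := by rw [hx]
        rw [hab, mul_assoc b, ha, mul_one] at this
        simpa [mul_assoc, ha, ← mul_assoc a a] using this
      · rintro rfl
        rw [hab, mul_assoc, ha, mul_one]
    have hi := cs.simple_mul_simple_self i
    have hj := cs.simple_mul_simple_self j
    simp only [invGen, Prod.mk.injEq, key _ _ _ hi rfl, key _ _ _ hj rfl, key _ _ _ hi hc,
      key _ _ _ hj hc.symm]
    constructor
    · have h2 : cs.simple i * (cs.simple j * (cs.simple i * (cs.simple j * r * cs.simple j)
          * cs.simple i) * cs.simple j) * cs.simple i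
          = (cs.simple i * cs.simple j) * (cs.simple i * cs.simple j) * r *
            ((cs.simple j * cs.simple i) * (cs.simple j * cs.simple i)) := by
        simp only [mul_assoc]
      rw [h2, hc]
      have h3 : cs.simple j * cs.simple i * (cs.simple j * cs.simple i) = 1 := by
        rw [← hc, mul_assoc, ← mul_assoc (cs.simple j), ← hc, mul_assoc, hj, mul_one, hi]
      rw [h3, one_mul, mul_one]
    · generalize (if r = cs.simple j then (1 : ZMod 2) else 0) = x
      generalize (if r = cs.simple i then (1 : ZMod 2) else 0) = y
      revert e x y
      decide
  · rw [show M i j = 0 from h, pow_zero]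

/-- The action of `W` on `W × ℤ/2` extending `invGen`. -/
noncomputable def invAct (hra : M.RightAngled) : W →* Function.End (W × ZMod 2) :=
  cs.lift ⟨invGen cs, invGen_liftable cs hra⟩

/-- The cocycle `η(w, r)`: the second coordinate of `w • (r, 0)`. It equals `1` exactly when the
reflection `r` is a right inversion of `w`. -/
noncomputable def eta (hra : M.RightAngled) (w r : W) : ZMod 2 := (invAct cs hra w (r, 0)).2

theorem invAct_simple (hra : M.RightAngled) (i : B) : invAct cs hra (cs.simple i) = invGen cs i :=
  cs.lift_apply_simple _ i

theorem invAct_apply (hra : M.RightAngled) (w r : W) (e : ZMod 2) :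
    invAct cs hra w (r, e) = (w * r * w⁻¹, e + eta cs hra w r) := by
  induction w using cs.simple_induction_left generalizing e with
  | one =>
    have : ∀ e, invAct cs hra 1 (r, e) = (r, e) := fun e => by rw [map_one]; rfl
    simp [eta, this]
  | mul_simple_left w i ih =>
    have h : ∀ e, invAct cs hra (cs.simple i * w) (r, e)
        = invGen cs i (invAct cs hra w (r, e)) := fun e => by
      rw [map_mul, invAct_simple]; rfl
    unfold eta
    rw [h, h, ih, ih 0]
    simp [invGen, mul_assoc, add_assoc]

theorem eta_mul (hra : M.RightAngled) (w w' r : W) :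
    eta cs hra (w * w') r = eta cs hra w' r + eta cs hra w (w' * r * w'⁻¹) := by
  have h : invAct cs hra (w * w') (r, 0) = invAct cs hra w (invAct cs hra w' (r, 0)) := by
    rw [map_mul]; rfl
  have h' : eta cs hra (w * w') r = (invAct cs hra w (invAct cs hra w' (r, 0))).2 := by
    rw [← h]; rfl
  rw [h', invAct_apply, invAct_apply]
  simp

open Classical in
theorem eta_simple (hra : M.RightAngled) (i : B) (r : W) :
    eta cs hra (cs.simple i) r = if r = cs.simple i then 1 else 0 := by
  unfold eta
  rw [invAct_simple]
  simp [invGen]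

open Classical in
theorem eta_wordProd (hra : M.RightAngled) (ω : List B) (r : W) :
    eta cs hra (cs.wordProd ω) r = ((cs.rightInvSeq ω).count r : ℕ) := by
  induction ω with
  | nil =>
    have : invAct cs hra 1 (r, 0) = (r, 0) := by rw [map_one]; rfl
    simp [eta, this]
  | cons i ω ih =>
    rw [wordProd_cons, eta_mul, eta_simple, rightInvSeq, List.count_cons, ih]
    have : cs.wordProd ω * r * (cs.wordProd ω)⁻¹ = cs.simple i ↔
        (cs.wordProd ω)⁻¹ * cs.simple i * cs.wordProd ω = r := by
      rw [mul_inv_eq_iff_eq_mul, mul_assoc, inv_mul_eq_iff_eq_mul, eq_comm]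
    simp only [this, beq_iff_eq]
    split_ifs <;> simp

theorem length_lt_of_eta (hra : M.RightAngled) {w r : W} (h : eta cs hra w r ≠ 0) :
    cs.length (w * r) < cs.length w := by
  classical
  obtain ⟨ω, hω, rfl⟩ := cs.exists_isReduced w
  rw [eta_wordProd] at h
  have hm : r ∈ cs.rightInvSeq ω := by
    by_contra hn
    exact h (by rw [List.count_eq_zero_of_not_mem hn]; rfl)
  exact (cs.isRightInversion_of_mem_rightInvSeq hω hm).2

theorem descent_iff (hra : M.RightAngled) (w : W) (i : B) :
    cs.IsRightDescent w i ↔ eta cs hra w (cs.simple i) ≠ 0 := by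
  refine ⟨fun h h0 => ?_, length_lt_of_eta cs hra⟩
  have h1 : cs.IsRightDescent (w * cs.simple i) i := by
    apply length_lt_of_eta cs hra
    rw [eta_mul, eta_simple]
    simp [h0]
  exact (cs.isRightDescent_iff_not_isRightDescent_mul.1 h) h1

/-! ### Lengths in an infinite dihedral parabolic subgroup -/

open Classical in
/-- The action of generators on `ℤ` where `a`, `b` are the reflections in `1/2` and `-1/2`, and the
other generators act trivially. -/
noncomputable def lineGen (a b : B) (i : B) : Function.End ℤ := fun n =>
  if i = a then 1 - n else if i = b then -1 - n else n

theorem lineGen_liftable (hra : M.RightAngled) {a b : B} (hab : M a b = 0) :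
    M.IsLiftable (lineGen a b) := by
  have hne : a ≠ b := by rintro rfl; simp at hab
  intro i j
  by_cases hij : i = j
  · subst hij
    rw [M.diagonal, pow_one]
    funext n
    change lineGen a b i (lineGen a b i n) = n
    unfold lineGen
    grind
  rcases hra i j hij with h | h
  · rw [show M i j = 2 from h, pow_two]
    funext n
    change lineGen a b i (lineGen a b j (lineGen a b i (lineGen a b j n))) = n
    have h' : M j i = 2 := by rw [M.symmetric]; exact h
    have h1 : ¬ (i = a ∧ j = b) := by rintro ⟨rfl, rfl⟩; simp_all
    have h2 : ¬ (i = b ∧ j = a) := by rintro ⟨rfl, rfl⟩; simp_all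
    unfold lineGen
    grind
  · rw [show M i j = 0 from h, pow_zero]

/-- The action of `W` on `ℤ` extending `lineGen`. -/
noncomputable def lineAct (hra : M.RightAngled) {a b : B} (hab : M a b = 0) :
    W →* Function.End ℤ :=
  cs.lift ⟨lineGen a b, lineGen_liftable hra hab⟩

theorem lineAct_simple_mul (hra : M.RightAngled) {a b : B} (hab : M a b = 0) (i : B) (w : W)
    (n : ℤ) : lineAct cs hra hab (cs.simple i * w) n
      = lineGen a b i (lineAct cs hra hab w n) := by
  have : lineAct cs hra hab (cs.simple i) = lineGen a b i := cs.lift_apply_simple _ i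
  rw [map_mul, this]; rfl

theorem lineAct_one (hra : M.RightAngled) {a b : B} (hab : M a b = 0) (n : ℤ) :
    lineAct cs hra hab 1 n = n := by
  rw [map_one]; rfl

/-- Each generator moves a point of `ℤ` at most one step away from `0`. -/
theorem natAbs_lineAct_le (hra : M.RightAngled) {a b : B} (hab : M a b = 0) (w : W) :
    (lineAct cs hra hab w 0).natAbs ≤ cs.length w := by
  obtain ⟨ω, hω, rfl⟩ := cs.exists_isReduced w
  rw [hω.eq]
  clear hω
  induction ω with
  | nil => simp [lineAct_one]
  | cons i ω ih =>
    rw [wordProd_cons, lineAct_simple_mul, List.length_cons]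
    unfold lineGen
    split_ifs <;> omega

theorem lineAct_pow (hra : M.RightAngled) {a b : B} (hab : M a b = 0) (k : ℕ) (n : ℤ) :
    lineAct cs hra hab ((cs.simple a * cs.simple b) ^ k) n = n + 2 * k := by
  have hne : b ≠ a := by rintro rfl; simp at hab
  induction k with
  | zero => simp [lineAct_one]
  | succ k ih =>
    rw [pow_succ', mul_assoc, lineAct_simple_mul, lineAct_simple_mul, ih]
    simp only [lineGen, if_true, if_neg hne]
    push_cast
    ring

theorem length_pow_le (a b : B) (k : ℕ) :
    cs.length ((cs.simple a * cs.simple b) ^ k) ≤ 2 * k := by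
  induction k with
  | zero => simp
  | succ k ih =>
    rw [pow_succ]
    have h1 := cs.length_mul_le ((cs.simple a * cs.simple b) ^ k) (cs.simple a * cs.simple b)
    have h2 := cs.length_mul_le (cs.simple a) (cs.simple b)
    simp only [length_simple] at h2
    omega

theorem length_pow_mul_le (a b : B) (k : ℕ) :
    cs.length ((cs.simple a * cs.simple b) ^ k * cs.simple a) ≤ 2 * k + 1 := by
  have h1 := cs.length_mul_le ((cs.simple a * cs.simple b) ^ k) (cs.simple a)
  have h2 := length_pow_le cs a b k
  simp only [length_simple] at h1
  omega

theorem le_length_pow (hra : M.RightAngled) {a b : B} (hab : M a b = 0) (k : ℕ) :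
    2 * k ≤ cs.length ((cs.simple a * cs.simple b) ^ k) := by
  have := natAbs_lineAct_le cs hra hab ((cs.simple a * cs.simple b) ^ k)
  rw [lineAct_pow] at this
  omega

theorem le_length_pow_mul (hra : M.RightAngled) {a b : B} (hab : M a b = 0) (k : ℕ) :
    2 * k + 1 ≤ cs.length ((cs.simple a * cs.simple b) ^ k * cs.simple a) := by
  have := natAbs_lineAct_le cs hra hab ((cs.simple a * cs.simple b) ^ k * cs.simple a)
  have h0 : lineAct cs hra hab (cs.simple a) 0 = 1 := by
    have h1 := lineAct_simple_mul cs hra hab a 1 0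
    rw [mul_one, lineAct_one] at h1
    rw [h1]
    simp [lineGen]
  have h : lineAct cs hra hab ((cs.simple a * cs.simple b) ^ k * cs.simple a) 0
      = lineAct cs hra hab ((cs.simple a * cs.simple b) ^ k)
        (lineAct cs hra hab (cs.simple a) 0) := by
    rw [map_mul]; rfl
  rw [h, h0, lineAct_pow] at this
  omega

theorem orderOf_eq_zero (hra : M.RightAngled) {a b : B} (hab : M a b = 0) :
    orderOf (cs.simple a * cs.simple b) = 0 := by
  rw [orderOf_eq_zero_iff']
  intro n hn h
  have := le_length_pow cs hra hab n
  rw [h, length_one] at this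
  omega

/-- Elements of `⟨s_a, s_b⟩` are alternating products. -/
theorem dihedral_form (a b : B) {d : W}
    (hd : d ∈ Subgroup.closure ({cs.simple a, cs.simple b} : Set W)) :
    (∃ k : ℕ, d = (cs.simple a * cs.simple b) ^ k) ∨
    (∃ k : ℕ, d = (cs.simple b * cs.simple a) ^ k) ∨
    (∃ k : ℕ, d = (cs.simple a * cs.simple b) ^ k * cs.simple a) ∨
    (∃ k : ℕ, d = (cs.simple b * cs.simple a) ^ k * cs.simple b) := by
  have step : ∀ (x y : B) (e : W), ((∃ k : ℕ, e = (cs.simple x * cs.simple y) ^ k) ∨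
      (∃ k : ℕ, e = (cs.simple y * cs.simple x) ^ k) ∨
      (∃ k : ℕ, e = (cs.simple x * cs.simple y) ^ k * cs.simple x) ∨
      (∃ k : ℕ, e = (cs.simple y * cs.simple x) ^ k * cs.simple y)) →
      ((∃ k : ℕ, e * cs.simple x = (cs.simple x * cs.simple y) ^ k) ∨
      (∃ k : ℕ, e * cs.simple x = (cs.simple y * cs.simple x) ^ k) ∨
      (∃ k : ℕ, e * cs.simple x = (cs.simple x * cs.simple y) ^ k * cs.simple x) ∨
      (∃ k : ℕ, e * cs.simple x = (cs.simple y * cs.simple x) ^ k * cs.simple y)) := by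
    rintro x y e (⟨k, rfl⟩ | ⟨k, rfl⟩ | ⟨k, rfl⟩ | ⟨k, rfl⟩)
    · exact .inr (.inr (.inl ⟨k, rfl⟩))
    · cases k with
      | zero => exact .inr (.inr (.inl ⟨0, by simp⟩))
      | succ k => exact .inr (.inr (.inr ⟨k, by simp [pow_succ, mul_assoc]⟩))
    · exact .inl ⟨k, by simp [mul_assoc]⟩
    · exact .inr (.inl ⟨k + 1, by simp [pow_succ, mul_assoc]⟩)
  induction hd using Subgroup.closure_induction_right with
  | one => exact .inl ⟨0, by simp⟩
  | mul_right x hx y hy ih =>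
    rcases hy with rfl | rfl
    · exact step a b x ih
    · have := step b a x (by tauto)
      tauto
  | mul_inv_cancel x hx y hy ih =>
    rcases hy with rfl | rfl
    · rw [inv_simple]; exact step a b x ih
    · rw [inv_simple]
      have := step b a x (by tauto)
      tauto

theorem dihedral_not_descent_both (hra : M.RightAngled) {a b : B} (hab : M a b = 0) {d : W}
    (hd : d ∈ Subgroup.closure ({cs.simple a, cs.simple b} : Set W))
    (ha : cs.IsRightDescent d a) (hb : cs.IsRightDescent d b) : False := by
  have hba : M b a = 0 := by rw [M.symmetric]; exact hab
  unfold IsRightDescent at ha hb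
  rcases dihedral_form cs a b hd with ⟨k, rfl⟩ | ⟨k, rfl⟩ | ⟨k, rfl⟩ | ⟨k, rfl⟩
  · have := length_pow_le cs a b k
    have := le_length_pow_mul cs hra hab k
    omega
  · have := length_pow_le cs b a k
    have := le_length_pow_mul cs hra hba k
    omega
  · have := length_pow_mul_le cs a b k
    have := le_length_pow cs hra hab (k + 1)
    rw [mul_assoc, ← pow_succ] at hb
    omega
  · have := length_pow_mul_le cs b a k
    have := le_length_pow cs hra hba (k + 1)
    rw [mul_assoc, ← pow_succ] at ha
    omega

/-! ### Descent sets -/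

theorem not_descent_both (hra : M.RightAngled) {a b : B} (hab : M a b = 0) {w : W}
    (ha : cs.IsRightDescent w a) (hb : cs.IsRightDescent w b) : False := by
  set H := Subgroup.closure ({cs.simple a, cs.simple b} : Set W) with hH
  have haH : cs.simple a ∈ H := Subgroup.subset_closure (by simp)
  have hbH : cs.simple b ∈ H := Subgroup.subset_closure (by simp)
  -- `w * e₀` is a shortest element of the coset `w H`.
  let f : H → ℕ := fun e => cs.length (w * e)
  obtain ⟨e₀, he₀⟩ : ∃ e₀ : H, ∀ e : H, f e₀ ≤ f e :=
    ⟨Function.argmin f, fun e => Function.argmin_le f e⟩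
  set d : W := (e₀ : W)⁻¹ with hd
  have hdH : d ∈ H := H.inv_mem e₀.2
  have key : ∀ i : B, cs.simple i ∈ H → cs.IsRightDescent w i → cs.IsRightDescent d i := by
    intro i hi h
    rw [descent_iff cs hra] at h ⊢
    have h0 : eta cs hra (w * e₀) (d * cs.simple i * d⁻¹) = 0 := by
      by_contra hne
      have h1 := length_lt_of_eta cs hra hne
      have h2 := he₀ (e₀ * ⟨d * cs.simple i * d⁻¹, H.mul_mem (H.mul_mem hdH hi) (H.inv_mem hdH)⟩)
      simp only [f, Subgroup.coe_mul, ← mul_assoc] at h1 h2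
      omega
    have hw : w = w * e₀ * d := by simp [hd]
    rwa [hw, eta_mul, h0, add_zero] at h
  exact dihedral_not_descent_both cs hra hab hdH (key a haH ha) (key b hbH hb)

theorem simple_injective (hra : M.RightAngled) : Function.Injective cs.simple := by
  classical
  intro i j hij
  by_contra hne
  have hz : ∀ x : Multiplicative (ZMod 2), x * x = 1 := by decide
  have hl : M.IsLiftable (fun k => if k = i then Multiplicative.ofAdd (1 : ZMod 2) else 1) := by
    intro k l
    by_cases hkl : k = l
    · subst hkl
      rw [hz, one_pow]
    rcases hra k l hkl with h | h
    · rw [show M k l = 2 from h, pow_two, hz]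
    · rw [show M k l = 0 from h, pow_zero]
  have h1 := cs.lift_apply_simple hl i
  have h2 := cs.lift_apply_simple hl j
  rw [← hij, h1] at h2
  simp [Ne.symm hne] at h2

theorem descent_mul_commute (hra : M.RightAngled) {i j : B} (hij : i ≠ j) (h : M i j ≠ 0) (w : W) :
    cs.IsRightDescent (w * cs.simple i) j ↔ cs.IsRightDescent w j := by
  have h2 : M i j = 2 := (hra i j hij).resolve_right h
  have hne : cs.simple j ≠ cs.simple i := fun e => hij (simple_injective cs hra e.symm)
  have hc : cs.simple i * cs.simple j * (cs.simple i)⁻¹ = cs.simple j := by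
    rw [commute_simple cs h2, mul_inv_cancel_right]
  rw [descent_iff cs hra, descent_iff cs hra, eta_mul, eta_simple, if_neg hne, hc, zero_add]

theorem descent_mul_self {w : W} {i : B} :
    cs.IsRightDescent (w * cs.simple i) i ↔ ¬ cs.IsRightDescent w i := by
  have := cs.isRightDescent_iff_not_isRightDescent_mul (w := w) (i := i)
  tauto

/-! ### Walks in the graph of infinite edges -/

/-- The `∞`-graph: `i` and `j` are adjacent when `m(i,j) = ∞`, encoded as `M i j = 0`. -/
def infGraph (M : CoxeterMatrix B) : SimpleGraph B where
  Adj i j := M i j = 0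
  symm := ⟨fun i j h => by rw [M.symmetric]; exact h⟩
  loopless := ⟨fun i h => by simp at h⟩

/-- Multiplying `w` by a walk starting at a non-descent ascends at every step, since consecutive
letters are never both descents; a descent of `w` survives only if it commutes with all letters. -/
theorem descent_mul_walk (hra : M.RightAngled) {b c : B} (p : (infGraph M).Walk b c) (w : W)
    (hb : ¬ cs.IsRightDescent w b) :
    cs.IsRightDescent (w * cs.wordProd p.support) c ∧
      ∀ t, cs.IsRightDescent (w * cs.wordProd p.support) t →
        t = c ∨ (cs.IsRightDescent w t ∧ ∀ u ∈ p.support, t ≠ u ∧ M t u ≠ 0) := by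
  induction p generalizing w with
  | @nil b =>
    have hbb := (descent_mul_self cs).2 hb
    simp only [SimpleGraph.Walk.support_nil, wordProd_singleton]
    refine ⟨hbb, fun t ht => ?_⟩
    by_cases htb : t = b
    · exact .inl htb
    have hM : M b t ≠ 0 := fun h0 => not_descent_both cs hra h0 hbb ht
    refine .inr ⟨(descent_mul_commute cs hra (Ne.symm htb) hM w).1 ht, ?_⟩
    simp only [List.mem_singleton]
    rintro u rfl
    exact ⟨htb, by rwa [M.symmetric]⟩
  | @cons b b' c hadj p ih =>
    have hbb := (descent_mul_self cs).2 hb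
    have hadj' : M b b' = 0 := hadj
    have hb' : ¬ cs.IsRightDescent (w * cs.simple b) b' :=
      fun h => not_descent_both cs hra hadj' hbb h
    obtain ⟨h1, h2⟩ := ih _ hb'
    rw [SimpleGraph.Walk.support_cons, wordProd_cons, ← mul_assoc]
    refine ⟨h1, fun t ht => ?_⟩
    rcases h2 t ht with h | ⟨htw, hts⟩
    · exact .inl h
    right
    have htb : t ≠ b := by
      rintro rfl
      exact (hts b' p.start_mem_support).2 hadj'
    have hM : M b t ≠ 0 := fun h0 => not_descent_both cs hra h0 hbb htw
    refine ⟨(descent_mul_commute cs hra (Ne.symm htb) hM w).1 htw, ?_⟩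
    intro u hu
    rcases List.mem_cons.1 hu with rfl | hu
    · exact ⟨htb, by rwa [M.symmetric]⟩
    · exact hts u hu

theorem exists_covering_walk {V : Type*} [Finite V] {G : SimpleGraph V} (hG : G.Preconnected)
    (b c : V) : ∃ p : G.Walk b c, ∀ v, v ∈ p.support := by
  have : ∀ l : List V, ∀ b, ∃ p : G.Walk b c, ∀ v ∈ l, v ∈ p.support := by
    intro l
    induction l with
    | nil => exact fun b => ⟨(hG b c).some, by simp⟩
    | cons v l ih =>
      intro b
      obtain ⟨q, hq⟩ := ih v
      refine ⟨(hG b v).some.append q, fun u hu => ?_⟩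
      rw [SimpleGraph.Walk.mem_support_append_iff]
      rcases List.mem_cons.1 hu with rfl | hu
      · exact .inr q.start_mem_support
      · exact .inr (hq u hu)
  obtain ⟨l, hl⟩ : ∃ l : List V, ∀ v, v ∈ l := by
    have := Fintype.ofFinite V
    exact ⟨Finset.univ.toList, by simp⟩
  obtain ⟨p, hp⟩ := this l b
  exact ⟨p, fun v => hp v (hl v)⟩

theorem descentSet_mul_covering_walk (hra : M.RightAngled) {b c : B}
    (p : (infGraph M).Walk b c) (hp : ∀ v, v ∈ p.support) (w : W)
    (hb : ¬ cs.IsRightDescent w b) :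
    descentSet cs (w * cs.wordProd p.support) = {c} := by
  obtain ⟨h1, h2⟩ := descent_mul_walk cs hra p w hb
  ext t
  simp only [descentSet, Set.mem_ofPred_eq, Set.mem_singleton_iff]
  constructor
  · intro ht
    exact (h2 t ht).resolve_right fun h => (h.2 t (hp t)).1 rfl
  · rintro rfl
    exact h1

/-- If the `∞`-graph contains a path `a — b — c`, then any `w` and `v` have a common non-descent
after right multiplication by `1` or by `sₐ`. -/
theorem exists_common_nondescent (hra : M.RightAngled) {a b c : B} (hac : a ≠ c)
    (hab : M a b = 0) (hbc : M b c = 0) (w v : W) :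
    ∃ y : W, cs.length y ≤ 1 ∧ ∃ i, ¬ cs.IsRightDescent (w * y) i ∧
      ¬ cs.IsRightDescent (v * y) i := by
  by_cases hex : ∃ i, ¬ cs.IsRightDescent w i ∧ ¬ cs.IsRightDescent v i
  · exact ⟨1, by simp, by simpa using hex⟩
  push Not at hex
  have hba : M b a = 0 := by rw [M.symmetric]; exact hab
  have main : ∀ w v : W, (∀ i, cs.IsRightDescent w i ∨ cs.IsRightDescent v i) →
      cs.IsRightDescent w b →
      ¬ cs.IsRightDescent (w * cs.simple a) b ∧ ¬ cs.IsRightDescent (v * cs.simple a) b := by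
    intro w v h hwb
    have hwa : ¬ cs.IsRightDescent w a := fun h => not_descent_both cs hra hab h hwb
    have hwc : ¬ cs.IsRightDescent w c := fun h => not_descent_both cs hra hbc hwb h
    have hva := (h a).resolve_left hwa
    have hvc := (h c).resolve_left hwc
    have hMac : M a c ≠ 0 := fun h0 => not_descent_both cs hra h0 hva hvc
    exact ⟨fun h => not_descent_both cs hra hab ((descent_mul_self cs).2 hwa) h,
      fun h => not_descent_both cs hra hbc h ((descent_mul_commute cs hra hac hMac v).2 hvc)⟩
  have hor : ∀ i, cs.IsRightDescent w i ∨ cs.IsRightDescent v i := fun i => by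
    have := hex i; tauto
  refine ⟨cs.simple a, by simp, b, ?_⟩
  rcases hor b with hb | hb
  · exact main w v hor hb
  · exact (main v w (fun i => (hor i).symm) hb).symm

/-! ### Consequences of irreducibility -/

/-- Otherwise `W` would be the direct product of `W_T` and `W_{S∖T}`; the two factors meet trivially
because of the retraction of `W` onto `W_T` that kills the generators outside `T`. -/
theorem exists_edge_of_irreducible (hra : M.RightAngled) (hirr : cs.Irreducible) {T : Set B}
    (hne : T.Nonempty) (hT : T ≠ Set.univ) : ∃ p ∈ T, ∃ q ∉ T, M p q = 0 := by
  classical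
  by_contra hcon
  push Not at hcon
  have hcomm : ∀ p ∈ T, ∀ q ∉ T, M p q = 2 := fun p hp q hq =>
    (hra p q (by rintro rfl; exact hq hp)).resolve_right (hcon p hp q hq)
  refine hirr ⟨T, hne, hT, ?_, ?_, ?_⟩
  · have h1 : Subgroup.closure (cs.simple '' T) ≤ Subgroup.centralizer (cs.simple '' Tᶜ) := by
      rw [Subgroup.closure_le]
      rintro _ ⟨p, hp, rfl⟩
      rw [SetLike.mem_coe, Subgroup.mem_centralizer_iff]
      rintro _ ⟨q, hq, rfl⟩
      exact (commute_simple cs (hcomm p hp q hq)).symm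
    have h2 : Subgroup.closure (cs.simple '' Tᶜ) ≤
        Subgroup.centralizer (Subgroup.closure (cs.simple '' T) : Set W) := by
      rw [Subgroup.closure_le]
      intro h hh
      rw [SetLike.mem_coe, Subgroup.mem_centralizer_iff]
      intro g hg
      exact (Subgroup.mem_centralizer_iff.1 (h1 hg) h hh).symm
    intro g hg h hh
    exact Subgroup.mem_centralizer_iff.1 (h2 hh) g hg
  · have hl : M.IsLiftable (fun i => if i ∈ T then cs.simple i else 1) := by
      intro i j
      by_cases hi : i ∈ T <;> by_cases hj : j ∈ T
      · simp [hi, hj]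
      · simp [hi, hj, hcomm i hi j hj]
      · simp [hi, hj, M.symmetric i j, hcomm j hj i hi]
      · simp [hi, hj]
    set ρ := cs.lift ⟨_, hl⟩ with hρ
    have e1 : Set.EqOn ρ (MonoidHom.id W) (Subgroup.closure (cs.simple '' T)) := by
      apply MonoidHom.eqOn_closure
      rintro _ ⟨p, hp, rfl⟩
      simp [hρ, cs.lift_apply_simple hl, hp]
    have e2 : Set.EqOn ρ (1 : W →* W) (Subgroup.closure (cs.simple '' Tᶜ)) := by
      apply MonoidHom.eqOn_closure
      rintro _ ⟨p, hp, rfl⟩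
      have hp' : p ∉ T := hp
      simp [hρ, cs.lift_apply_simple hl, hp']
    rw [eq_bot_iff]
    rintro g ⟨hg1, hg2⟩
    have h1 := e1 hg1
    have h2 := e2 hg2
    rw [h1] at h2
    simpa using h2
  · rw [← Subgroup.closure_union, ← Set.image_union, Set.union_compl_self, Set.image_univ,
      cs.subgroup_closure_range_simple]

theorem infGraph_preconnected (hra : M.RightAngled) (hirr : cs.Irreducible) :
    (infGraph M).Preconnected := by
  intro x y
  by_contra hxy
  obtain ⟨p, hp, q, hq, hpq⟩ := exists_edge_of_irreducible cs hra hirr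
    (T := {z | (infGraph M).Reachable x z}) ⟨x, SimpleGraph.Reachable.refl x⟩
    (fun h => hxy (by have : y ∈ Set.univ := trivial; rwa [← h] at this))
  have hadj : (infGraph M).Adj p q := hpq
  exact hq (SimpleGraph.Reachable.trans hp hadj.reachable)

theorem finite_of_unique (cs : CoxeterSystem M W) {a : B} (h : ∀ i, i = a) : Finite W := by
  have : ∀ w : W, w ∈ ({1, cs.simple a} : Set W) := by
    intro w
    induction w using cs.simple_induction_left with
    | one => simp
    | mul_simple_left w i ih =>
      rw [h i]
      rcases ih with rfl | rfl <;> simp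
  exact Set.finite_univ_iff.1 ((Set.toFinite {1, cs.simple a}).subset fun w _ => this w)

open Classical in
theorem dihedral_equiv (cs : CoxeterSystem M W) {a b : B} (hab : M a b = 0) (h : ∀ i, i = a ∨ i = b) :
    Nonempty (W ≃* DihedralGroup 0) := by
  have hne : b ≠ a := by rintro rfl; simp at hab
  have hl : M.IsLiftable
      (fun i => if i = a then DihedralGroup.sr (0 : ZMod 0) else DihedralGroup.sr 1) := by
    intro i j
    have hba : M b a = 0 := by rw [M.symmetric]; exact hab
    rcases h i with rfl | rfl <;> rcases h j with rfl | rfl <;> simp [hab, hba, hne]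
  set φ := cs.lift ⟨_, hl⟩ with hφ
  have ha : φ (cs.simple a) = DihedralGroup.sr 0 := by
    rw [hφ, cs.lift_apply_simple hl, if_pos rfl]
  have hb : φ (cs.simple b) = DihedralGroup.sr 1 := by
    rw [hφ, cs.lift_apply_simple hl, if_neg hne]
  have hr : ∀ k : ℤ, φ ((cs.simple a * cs.simple b) ^ k) = DihedralGroup.r (Int.cast k) := by
    intro k
    rw [map_zpow, map_mul, ha, hb, DihedralGroup.sr_mul_sr, sub_zero,
      DihedralGroup.r_one_zpow]
  have hs : ∀ k : ℤ, φ (cs.simple a * (cs.simple a * cs.simple b) ^ k) =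
      DihedralGroup.sr (Int.cast k) := by
    intro k
    rw [map_mul, hr, ha, DihedralGroup.sr_mul_r, zero_add]
  have form : ∀ w : W, (∃ k : ℤ, w = (cs.simple a * cs.simple b) ^ k) ∨
      ∃ k : ℤ, w = cs.simple a * (cs.simple a * cs.simple b) ^ k := by
    intro w
    induction w using cs.simple_induction_left with
    | one => exact .inl ⟨0, by simp⟩
    | mul_simple_left w i ih =>
      have hinv : cs.simple b = cs.simple a * (cs.simple a * cs.simple b) := by simp
      have hinv' : cs.simple b * cs.simple a = (cs.simple a * cs.simple b)⁻¹ := by simp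
      rcases h i with rfl | rfl <;> rcases ih with ⟨k, rfl⟩ | ⟨k, rfl⟩
      · exact .inr ⟨k, rfl⟩
      · exact .inl ⟨k, by simp⟩
      · refine .inr ⟨1 + k, ?_⟩
        rw [zpow_add, zpow_one]
        simp only [← mul_assoc, simple_mul_simple_self, one_mul]
      · refine .inl ⟨-1 + k, ?_⟩
        rw [zpow_add, zpow_neg_one, ← hinv', mul_assoc]
  refine ⟨MulEquiv.ofBijective φ ⟨?_, ?_⟩⟩
  · rw [injective_iff_map_eq_one]
    intro w hw
    rcases form w with ⟨k, rfl⟩ | ⟨k, rfl⟩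
    · rw [hr, DihedralGroup.one_def] at hw
      have : k = 0 := Int.cast_eq_zero.1 (DihedralGroup.r.inj hw)
      rw [this, zpow_zero]
    · rw [hs, DihedralGroup.one_def] at hw
      cases hw
  · rintro (k | k)
    · obtain ⟨k, rfl⟩ := ZMod.intCast_surjective k
      exact ⟨_, hr k⟩
    · obtain ⟨k, rfl⟩ := ZMod.intCast_surjective k
      exact ⟨_, hs k⟩


end RACG

/-- the core of the proof of Theorem 8.1, via Theorem 7.1(2). Let
`(W,S)` be an irreducible right-angled Coxeter system with `W` infinite and not
isomorphic to the infinite dihedral group.  Then for every `s₀ ∈ S` there are `t₀ ∈ S`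
and `K > 0` such that `o(s₀t₀) = ∞` and for all `w, v ∈ W` there is `x ∈ W` with
`ℓ(x) ≤ K` and `wx, vx ∈ W^{{s₀}}`. -/
theorem exists_common_descent_singleton {B W : Type*} [Finite B] [Group W]
    {M : CoxeterMatrix B} (cs : CoxeterSystem M W)
    (hra : M.RightAngled) (hirr : cs.Irreducible)
    (hinf : Infinite W) (hdih : IsEmpty (W ≃* DihedralGroup 0)) :
    ∀ s₀ : B, ∃ (t₀ : B) (K : ℝ), 0 < K ∧
      orderOf (cs.simple s₀ * cs.simple t₀) = 0 ∧
      ∀ w v : W, ∃ x : W, (cs.length x : ℝ) ≤ K ∧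
        descentSet cs (w * x) = {s₀} ∧ descentSet cs (v * x) = {s₀} := by
  open RACG CoxeterSystem in
  intro s₀
  have edge : ∀ T : Set B, T.Nonempty → T ≠ Set.univ → ∃ p ∈ T, ∃ q ∉ T, M p q = 0 :=
    fun T => exists_edge_of_irreducible cs hra hirr
  obtain ⟨t₀, ht₀⟩ : ∃ t₀, M s₀ t₀ = 0 := by
    obtain ⟨p, rfl, q, -, hpq⟩ := edge {s₀} (Set.singleton_nonempty s₀) (fun h => by
      have : Finite W := finite_of_unique cs (a := s₀) fun i => by
        have : i ∈ Set.univ := trivial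
        rwa [← h] at this
      exact not_finite W)
    exact ⟨q, hpq⟩
  have hts : M t₀ s₀ = 0 := by rw [M.symmetric]; exact ht₀
  obtain ⟨a, b, c, hac, hab, hbc⟩ : ∃ a b c, a ≠ c ∧ M a b = 0 ∧ M b c = 0 := by
    obtain ⟨p, hp, q, hq, hpq⟩ := edge {s₀, t₀} ⟨s₀, by simp⟩ (fun h => by
      obtain ⟨e⟩ := dihedral_equiv cs ht₀ fun i => by
        have : i ∈ Set.univ := trivial
        rwa [← h] at this
      exact hdih.false e)
    simp only [Set.mem_insert_iff, Set.mem_singleton_iff, not_or] at hq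
    rcases hp with rfl | rfl
    · exact ⟨t₀, p, q, Ne.symm hq.2, hts, hpq⟩
    · exact ⟨s₀, p, q, Ne.symm hq.1, ht₀, hpq⟩
  choose p hp using fun b => exists_covering_walk (infGraph_preconnected cs hra hirr) b s₀
  obtain ⟨N, hN⟩ := (Set.finite_range fun b => (p b).support.length).bddAbove
  refine ⟨t₀, (1 + N : ℕ), by positivity, orderOf_eq_zero cs hra ht₀, fun w v => ?_⟩
  obtain ⟨y, hy, i, hwi, hvi⟩ := exists_common_nondescent cs hra hac hab hbc w v
  refine ⟨y * cs.wordProd (p i).support, ?_, ?_, ?_⟩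
  · have h1 := cs.length_mul_le y (cs.wordProd (p i).support)
    have h2 := cs.length_wordProd_le (p i).support
    have h3 : (p i).support.length ≤ N := hN ⟨i, rfl⟩
    exact_mod_cast (by omega : cs.length (y * cs.wordProd (p i).support) ≤ 1 + N)
  · rw [← mul_assoc]
    exact descentSet_mul_covering_walk cs hra (p i) (hp i) _ hwi
  · rw [← mul_assoc]
    exact descentSet_mul_covering_walk cs hra (p i) (hp i) _ hvi
end

section
/- Let (W,S) be a right-angled Coxeter system, let w ∈ W, and let t₁, …, t_n ∈ S be such that t₁ ∉ S(w) and o(t_i t_{i+1}) = ∞ for every i ∈ {1, …, n−1}. Then S(w·t₁t₂⋯t_n) = { t ∈ S(w) : t t_i = t_i t for every i ∈ {1, …, n} } ∪ { t_n }. -/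
namespace RightAngledDescent

open CoxeterSystem

variable {B W : Type*} [Group W] {M : CoxeterMatrix B}

/-! ### Orders of products of two generators -/

theorem simple_injective (cs : CoxeterSystem M W) (hra : M.RightAngled) :
    Function.Injective cs.simple := by
  classical
  intro i j hij
  by_contra hne
  -- The homomorphism to `{±1}` sending `sᵢ` to `-1` and the other generators to `1`.
  have hl : M.IsLiftable (fun k => if k = i then (-1 : ℤˣ) else 1) := by
    intro a b
    by_cases hab : a = b
    · subst hab
      have hm : M.M a a = 1 := M.diagonal a
      rw [hm, pow_one]
      exact Int.units_mul_self _
    · rcases hra a b hab with h | h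
      · rw [h]
        exact Int.units_sq _
      · rw [h, pow_zero]
  have h := congrArg (cs.lift ⟨_, hl⟩) hij
  rw [cs.lift_apply_simple, cs.lift_apply_simple, if_pos rfl, if_neg (Ne.symm hne)] at h
  exact absurd h (by decide)

/-- The retraction onto the infinite dihedral group killing all generators other than `sᵢ` and `sⱼ`
shows that `sᵢ sⱼ` has infinite order. -/
theorem pow_ne_one (cs : CoxeterSystem M W) (hra : M.RightAngled) {i j : B}
    (hij : M.M i j = 0) (n : ℕ) : (cs.simple i * cs.simple j) ^ (n + 1) ≠ 1 := by
  classical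
  intro hpow
  have hne : i ≠ j := by
    rintro rfl
    have := M.diagonal i
    omega
  have hji : M.M j i = 0 := by rw [M.symmetric]; exact hij
  let f : B → DihedralGroup 0 := fun k =>
    if k = i then DihedralGroup.sr 0 else if k = j then DihedralGroup.sr 1 else 1
  have hsq : ∀ k, f k * f k = 1 := by
    intro k
    simp only [f]
    split_ifs <;> simp
  have hl : M.IsLiftable f := by
    intro a b
    by_cases hab : a = b
    · subst hab
      rw [hsq, one_pow]
    · rcases hra a b hab with h | h
      · rw [h]
        -- `m(a, b) = 2`, so `{a, b} ≠ {i, j}` and one of the two images is trivial.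
        have h1 : f a = 1 ∨ f b = 1 := by
          by_cases ha : a = i
          · subst ha
            right
            have hb : b ≠ j := by rintro rfl; omega
            simp [f, Ne.symm hab, hb]
          · by_cases ha' : a = j
            · subst ha'
              right
              have hb : b ≠ i := by rintro rfl; omega
              simp [f, Ne.symm hab, hb]
            · left
              simp [f, ha, ha']
        rcases h1 with h1 | h1
        · rw [h1, one_mul, pow_two, hsq]
        · rw [h1, mul_one, pow_two, hsq]
      · rw [h, pow_zero]
  have h := congrArg (cs.lift ⟨f, hl⟩) hpow
  rw [map_pow, map_mul, cs.lift_apply_simple, cs.lift_apply_simple, map_one] at h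
  have hr : f i * f j = DihedralGroup.r 1 := by simp [f, Ne.symm hne]
  rw [hr] at h
  have ho : orderOf (DihedralGroup.r 1 : DihedralGroup 0) = 0 := DihedralGroup.orderOf_r_one
  have hd := orderOf_dvd_of_pow_eq_one h
  rw [ho] at hd
  have := Nat.eq_zero_of_zero_dvd hd
  omega

theorem commute_of_eq_two (cs : CoxeterSystem M W) {i j : B} (hij : M.M i j = 2) :
    cs.simple i * cs.simple j = cs.simple j * cs.simple i := by
  have h := cs.simple_mul_simple_pow i j
  rw [show M i j = 2 from hij, pow_two] at h
  simpa using eq_inv_of_mul_eq_one_left h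

theorem not_commute_of_eq_zero (cs : CoxeterSystem M W) (hra : M.RightAngled) {i j : B}
    (hij : M.M i j = 0) : cs.simple i * cs.simple j ≠ cs.simple j * cs.simple i := by
  intro h
  apply pow_ne_one cs hra hij 1
  rw [pow_two]
  nth_rewrite 2 [h]
  simp [mul_assoc]

/-! ### The reflection cocycle -/

open Classical in
/-- The action of the generator `sᵢ` on `W × ℤ/2`: conjugation on the first factor, with a sign
change exactly at `x = sᵢ`. All of `W` is used in place of the set of reflections. -/
noncomputable def genAct (cs : CoxeterSystem M W) (i : B) : Function.End (W × ZMod 2) :=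
  fun p => (cs.simple i * p.1 * (cs.simple i)⁻¹, p.2 + if p.1 = cs.simple i then 1 else 0)

open Classical in
theorem genAct_apply (cs : CoxeterSystem M W) (i : B) (x : W) (e : ZMod 2) :
    genAct cs i (x, e) =
      ((cs.simple i * x * (cs.simple i)⁻¹, e + if x = cs.simple i then 1 else 0) : W × ZMod 2) :=
  rfl

theorem genAct_sq (cs : CoxeterSystem M W) (i : B) : genAct cs i * genAct cs i = 1 := by
  classical
  funext ⟨x, e⟩
  change genAct cs i (genAct cs i (x, e)) = (x, e)
  have h : cs.simple i * x * (cs.simple i)⁻¹ = cs.simple i ↔ x = cs.simple i := by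
    rw [mul_inv_eq_iff_eq_mul, mul_right_inj]
  rw [genAct_apply, genAct_apply]
  simp only [if_congr h rfl rfl, Prod.mk.injEq]
  constructor
  · simp [mul_assoc]
  · rw [add_assoc, CharTwo.add_self_eq_zero, add_zero]

theorem genAct_commute (cs : CoxeterSystem M W) {i j : B}
    (h : cs.simple i * cs.simple j = cs.simple j * cs.simple i) :
    genAct cs i * genAct cs j = genAct cs j * genAct cs i := by
  classical
  funext ⟨x, e⟩
  change genAct cs i (genAct cs j (x, e)) = genAct cs j (genAct cs i (x, e))
  have key : ∀ a b : W, a * b = b * a → (a * x * a⁻¹ = b ↔ x = b) := by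
    intro a b hab
    rw [mul_inv_eq_iff_eq_mul, ← hab, mul_right_inj]
  rw [genAct_apply, genAct_apply, genAct_apply, genAct_apply]
  simp only [if_congr (key _ _ h) rfl rfl, if_congr (key _ _ h.symm) rfl rfl, Prod.mk.injEq]
  constructor
  · calc _ = (cs.simple i * cs.simple j) * x * (cs.simple i * cs.simple j)⁻¹ := by group
      _ = (cs.simple j * cs.simple i) * x * (cs.simple j * cs.simple i)⁻¹ := by rw [h]
      _ = _ := by group
  · exact add_right_comm e _ _

theorem genAct_liftable (cs : CoxeterSystem M W) (hra : M.RightAngled) :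
    M.IsLiftable (genAct cs) := by
  intro a b
  by_cases hab : a = b
  · subst hab
    rw [genAct_sq, one_pow]
  · rcases hra a b hab with h | h
    · rw [h, pow_two]
      nth_rewrite 2 [genAct_commute cs (commute_of_eq_two cs h)]
      rw [mul_assoc, ← mul_assoc (genAct cs b), genAct_sq, one_mul, genAct_sq]
    · rw [h, pow_zero]

/-- The reflection cocycle `η(w, x) ∈ ℤ/2`. -/
noncomputable def eta (cs : CoxeterSystem M W) (hra : M.RightAngled) (w x : W) : ZMod 2 :=
  (cs.lift ⟨genAct cs, genAct_liftable cs hra⟩ w (x, 0)).2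

theorem eta_one (cs : CoxeterSystem M W) (hra : M.RightAngled) (x : W) :
    eta cs hra 1 x = 0 := by
  unfold eta
  rw [map_one]
  rfl

open Classical in
theorem eta_simple (cs : CoxeterSystem M W) (hra : M.RightAngled) (i : B) (x : W) :
    eta cs hra (cs.simple i) x = if x = cs.simple i then 1 else 0 := by
  unfold eta
  rw [cs.lift_apply_simple, genAct_apply, zero_add]

theorem lift_genAct_apply (cs : CoxeterSystem M W) (hra : M.RightAngled) (w x : W) (e : ZMod 2) :
    cs.lift ⟨genAct cs, genAct_liftable cs hra⟩ w (x, e) =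
      (w * x * w⁻¹, e + eta cs hra w x) := by
  induction w using cs.simple_induction_left generalizing e with
  | one =>
    rw [eta_one, map_one]
    simp [Function.End.one_def]
  | mul_simple_left w i ih =>
    have hstep : ∀ e : ZMod 2, cs.lift ⟨genAct cs, genAct_liftable cs hra⟩ (cs.simple i * w) (x, e) =
        genAct cs i (w * x * w⁻¹, e + eta cs hra w x) := by
      intro e
      rw [map_mul, cs.lift_apply_simple, ← ih]
      rfl
    have heta : eta cs hra (cs.simple i * w) x =
        (genAct cs i (w * x * w⁻¹, 0 + eta cs hra w x)).2 := by
      rw [← hstep]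
      rfl
    rw [hstep, heta]
    rw [genAct_apply, genAct_apply]
    simp only [Prod.mk.injEq]
    constructor
    · group
    · ring

/-- The cocycle identity. -/
theorem eta_mul (cs : CoxeterSystem M W) (hra : M.RightAngled) (a b x : W) :
    eta cs hra (a * b) x = eta cs hra b x + eta cs hra a (b * x * b⁻¹) := by
  have h : cs.lift ⟨genAct cs, genAct_liftable cs hra⟩ (a * b) (x, 0) =
      cs.lift ⟨genAct cs, genAct_liftable cs hra⟩ a
        (cs.lift ⟨genAct cs, genAct_liftable cs hra⟩ b (x, 0)) := by
    rw [map_mul]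
    rfl
  rw [lift_genAct_apply, lift_genAct_apply, lift_genAct_apply] at h
  simpa using congrArg Prod.snd h

/-! ### The exchange condition -/

theorem mem_rightInvSeq_of_eta_ne_zero (cs : CoxeterSystem M W) (hra : M.RightAngled)
    (ω : List B) (x : W) (h : eta cs hra (cs.wordProd ω) x ≠ 0) : x ∈ cs.rightInvSeq ω := by
  induction ω with
  | nil => simp [eta_one] at h
  | cons i ω ih =>
    rw [cs.wordProd_cons, eta_mul, eta_simple] at h
    simp only [rightInvSeq, List.mem_cons]
    by_cases hx : cs.wordProd ω * x * (cs.wordProd ω)⁻¹ = cs.simple i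
    · left
      rw [← hx]
      group
    · right
      apply ih
      simpa [hx] using h

/-- The exchange condition, in terms of the cocycle. -/
theorem length_mul_lt_of_eta_ne_zero (cs : CoxeterSystem M W) (hra : M.RightAngled) {w x : W}
    (h : eta cs hra w x ≠ 0) : cs.length (w * x) < cs.length w := by
  obtain ⟨ω, hω, rfl⟩ := cs.exists_isReduced w
  exact (cs.isRightInversion_of_mem_rightInvSeq hω
    (mem_rightInvSeq_of_eta_ne_zero cs hra ω x h)).2

theorem isRightDescent_iff_eta (cs : CoxeterSystem M W) (hra : M.RightAngled) (w : W) (i : B) :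
    cs.IsRightDescent w i ↔ eta cs hra w (cs.simple i) ≠ 0 := by
  refine ⟨fun hd h0 => ?_, fun h => length_mul_lt_of_eta_ne_zero cs hra h⟩
  -- If `η(w, sᵢ) = 0`, then `η(w sᵢ, sᵢ) = 1`, so `w = (w sᵢ) sᵢ` is shorter than `w sᵢ`.
  have h1 : eta cs hra (w * cs.simple i) (cs.simple i) ≠ 0 := by
    rw [eta_mul, eta_simple]
    simp [h0]
  have h2 := length_mul_lt_of_eta_ne_zero cs hra h1
  rw [cs.simple_mul_simple_cancel_right] at h2
  unfold CoxeterSystem.IsRightDescent at hd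
  omega

/-! ### Pairs of generators of infinite order -/

/-- When `m(i, j) = ∞`, the alternating words ending in `j` have no right inversion of the form
`(sᵢ sⱼ)ⁿ sᵢ` with `n ≥ 0`. -/
theorem eta_alternatingWord (cs : CoxeterSystem M W) (hra : M.RightAngled) (k : ℕ) :
    ∀ (i j : B) (n : ℕ), M.M i j = 0 →
      eta cs hra (cs.wordProd (alternatingWord i j k))
        ((cs.simple i * cs.simple j) ^ n * cs.simple i) = 0 := by
  induction k with
  | zero =>
    intro i j n _
    simp [alternatingWord, eta_one]
  | succ k ih =>
    intro i j n hij
    have hji : M.M j i = 0 := by rw [M.symmetric]; exact hij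
    have hne : (cs.simple i * cs.simple j) ^ n * cs.simple i ≠ cs.simple j := by
      intro h
      apply pow_ne_one cs hra hij n
      rw [pow_succ, ← mul_assoc, h, cs.simple_mul_simple_self]
    have hconj : cs.simple j * ((cs.simple i * cs.simple j) ^ n * cs.simple i) *
        (cs.simple j)⁻¹ = (cs.simple j * cs.simple i) ^ (n + 1) * cs.simple j := by
      rw [cs.inv_simple, pow_succ, ← mul_assoc, ← mul_assoc]
      rw [mul_pow_mul]
    rw [alternatingWord_succ, cs.wordProd_concat, eta_mul, eta_simple, if_neg hne, hconj,
      ih j i (n + 1) hji, add_zero]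

/-- If `i` and `j` with `m(i, j) = ∞` were both right descents of `v`, then arbitrarily long
alternating words could be split off from `v` on the right with additive lengths. -/
theorem exists_eq_mul_alternatingWord (cs : CoxeterSystem M W) (hra : M.RightAngled) (v : W)
    (k : ℕ) :
    ∀ i j : B, M.M i j = 0 → cs.IsRightDescent v i → cs.IsRightDescent v j →
      ∃ u : W, v = u * cs.wordProd (alternatingWord i j k) ∧
        cs.length v = cs.length u + k := by
  induction k with
  | zero =>
    intro i j _ _ _
    exact ⟨v, by simp [alternatingWord], rfl⟩
  | succ k ih =>
    intro i j hij hi hj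
    have hji : M.M j i = 0 := by rw [M.symmetric]; exact hij
    obtain ⟨u, hu, hlen⟩ := ih j i hji hj hi
    set β := cs.wordProd (alternatingWord j i k) with hβ
    have h0 : eta cs hra β (cs.simple j) = 0 := by
      simpa using eta_alternatingWord cs hra k j i 0 hji
    -- The exchange for the descent `j` therefore deletes a letter from `u`, not from `β`.
    have h1 : eta cs hra u (β * cs.simple j * β⁻¹) ≠ 0 := by
      have h := (isRightDescent_iff_eta cs hra v j).1 hj
      rw [hu, eta_mul, h0, zero_add] at h
      exact h
    have h2 := length_mul_lt_of_eta_ne_zero cs hra h1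
    have h3 : v = u * (β * cs.simple j * β⁻¹) * cs.wordProd (alternatingWord i j (k + 1)) := by
      rw [alternatingWord_succ, cs.wordProd_concat, ← hβ, hu]
      simp [mul_assoc]
    refine ⟨u * (β * cs.simple j * β⁻¹), h3, ?_⟩
    have h4 : cs.length v ≤ cs.length (u * (β * cs.simple j * β⁻¹)) + (k + 1) := by
      calc cs.length v
          ≤ cs.length (u * (β * cs.simple j * β⁻¹)) +
            cs.length (cs.wordProd (alternatingWord i j (k + 1))) := by
            conv_lhs => rw [h3]
            exact cs.length_mul_le _ _
        _ ≤ _ := by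
            have := cs.length_wordProd_le (alternatingWord i j (k + 1))
            rw [length_alternatingWord] at this
            omega
    omega

theorem not_both_descents (cs : CoxeterSystem M W) (hra : M.RightAngled) {v : W} {i j : B}
    (hij : M.M i j = 0) (hi : cs.IsRightDescent v i) : ¬ cs.IsRightDescent v j := by
  intro hj
  obtain ⟨u, -, hu⟩ := exists_eq_mul_alternatingWord cs hra v (cs.length v + 1) i j hij hi hj
  omega

/-! ### Descents after multiplication by a generator -/

theorem isRightDescent_mul_simple_self (cs : CoxeterSystem M W) {v : W} {j : B}
    (hj : ¬ cs.IsRightDescent v j) : cs.IsRightDescent (v * cs.simple j) j := by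
  rwa [cs.isRightDescent_iff_not_isRightDescent_mul, cs.simple_mul_simple_cancel_right]

/-- The case `n = 1` of the theorem. -/
theorem isRightDescent_mul_simple_iff (cs : CoxeterSystem M W) (hra : M.RightAngled) {v : W}
    {j : B} (hj : ¬ cs.IsRightDescent v j) (i : B) :
    cs.IsRightDescent (v * cs.simple j) i ↔
      (cs.IsRightDescent v i ∧ cs.simple i * cs.simple j = cs.simple j * cs.simple i) ∨
        i = j := by
  have hself := isRightDescent_mul_simple_self cs hj
  by_cases hij : i = j
  · subst hij
    simp [hself]
  · rcases hra i j hij with h | h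
    · have hc := commute_of_eq_two cs h
      have hne : cs.simple i ≠ cs.simple j := fun h => hij (simple_injective cs hra h)
      have hconj : cs.simple j * cs.simple i * (cs.simple j)⁻¹ = cs.simple i := by
        rw [← hc, mul_inv_cancel_right]
      rw [isRightDescent_iff_eta cs hra, isRightDescent_iff_eta cs hra, eta_mul, eta_simple,
        if_neg hne, hconj, zero_add]
      simp [hc, hij]
    · have hji : M.M j i = 0 := by rw [M.symmetric]; exact h
      have h1 := not_both_descents cs hra hji hself
      have h2 := not_commute_of_eq_zero cs hra h
      simp [h1, h2, hij]

theorem eq_zero_of_orderOf (cs : CoxeterSystem M W) {i j : B}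
    (h : orderOf (cs.simple i * cs.simple j) = 0) : M.M i j = 0 := by
  by_contra hne
  exact orderOf_eq_zero_iff'.1 h _ (Nat.pos_of_ne_zero hne) (cs.simple_mul_simple_pow i j)

end RightAngledDescent

/-- first part of the proof of Lemma 8.4, via Lemma 8.3. Let `(W,S)`
be a right-angled Coxeter system, `w ∈ W`, and `t₁, …, t_n ∈ S` with `t₁ ∉ S(w)` and
`o(tᵢtᵢ₊₁) = ∞` for `1 ≤ i ≤ n-1`.  Then
`S(w·t₁⋯t_n) = { t ∈ S(w) : t tᵢ = tᵢ t for all i } ∪ {t_n}`. -/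
theorem descentSet_mul_word {B W : Type*} [Finite B] [Group W]
    {M : CoxeterMatrix B} (cs : CoxeterSystem M W)
    (hra : M.RightAngled)
    (w : W) (n : ℕ) (hn : 1 ≤ n) (t : ℕ → B)
    (h1 : ¬ cs.IsRightDescent w (t 1))
    (h2 : ∀ i : ℕ, 1 ≤ i → i < n →
      orderOf (cs.simple (t i) * cs.simple (t (i + 1))) = 0) :
    descentSet cs (w * cs.wordProd ((List.range n).map (fun k => t (k + 1)))) =
      {b : B | b ∈ descentSet cs w ∧ ∀ i : ℕ, 1 ≤ i → i ≤ n →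
          cs.simple b * cs.simple (t i) = cs.simple (t i) * cs.simple b} ∪
        {t n} := by
  have hM : ∀ i : ℕ, 1 ≤ i → i < n → M.M (t i) (t (i + 1)) = 0 := fun i hi hin =>
    RightAngledDescent.eq_zero_of_orderOf cs (h2 i hi hin)
  clear h2
  induction n, hn using Nat.le_induction with
  | base =>
    ext b
    have h := RightAngledDescent.isRightDescent_mul_simple_iff cs hra h1 b
    have hall : (∀ i : ℕ, 1 ≤ i → i ≤ 1 →
        cs.simple b * cs.simple (t i) = cs.simple (t i) * cs.simple b) ↔
        cs.simple b * cs.simple (t 1) = cs.simple (t 1) * cs.simple b :=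
      ⟨fun h => h 1 le_rfl le_rfl, fun h i hi hi' => by
        obtain rfl : i = 1 := le_antisymm hi' hi
        exact h⟩
    simpa [descentSet, hall, or_comm] using h
  | succ n hn ih =>
    have ih := ih fun i hi hin => hM i hi (by omega)
    have hz := hM n hn (Nat.lt_succ_self n)
    set v := w * cs.wordProd ((List.range n).map (fun k => t (k + 1))) with hv
    have hmem : ∀ b, cs.IsRightDescent v b ↔ (cs.IsRightDescent w b ∧ ∀ i : ℕ, 1 ≤ i → i ≤ n →
        cs.simple b * cs.simple (t i) = cs.simple (t i) * cs.simple b) ∨ b = t n :=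
      fun b => Set.ext_iff.1 ih b
    have hnd : ¬ cs.IsRightDescent v (t (n + 1)) :=
      RightAngledDescent.not_both_descents cs hra hz ((hmem _).2 (Or.inr rfl))
    have hprod : w * cs.wordProd ((List.range (n + 1)).map (fun k => t (k + 1))) =
        v * cs.simple (t (n + 1)) := by
      rw [List.range_succ, List.map_append, cs.wordProd_append, ← mul_assoc, ← hv]
      simp
    rw [hprod]
    ext b
    have h := RightAngledDescent.isRightDescent_mul_simple_iff cs hra hnd b
    change cs.IsRightDescent _ b ↔ (cs.IsRightDescent w b ∧ _) ∨ b = t (n + 1)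
    rw [h, hmem]
    have hnc := RightAngledDescent.not_commute_of_eq_zero cs hra hz
    constructor
    · rintro (⟨⟨hb, hc⟩ | rfl, hc'⟩ | rfl)
      · refine Or.inl ⟨hb, fun i hi hin => ?_⟩
        rcases Nat.lt_or_eq_of_le hin with hlt | rfl
        · exact hc i hi (by omega)
        · exact hc'
      · exact absurd hc' hnc
      · exact Or.inr rfl
    · rintro (⟨hb, hc⟩ | rfl)
      · exact Or.inl ⟨Or.inl ⟨hb, fun i hi hin => hc i hi (by omega)⟩,
          hc (n + 1) (by omega) le_rfl⟩
      · exact Or.inr rfl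
end
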